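/- arXiv:1602.07061 — 2 statements merged into one kernel-verified Lean document; each statement's English description precedes it below -/
import Mathlib

section
/- Let k be a field, let n ≥ 1, and let w₁, w₂ : {1,…,n} → ℤ be nondecreasing sequences of integers. Let P = (p_{ij}) be an n×n matrix with entries in the polynomial ring k[x,y] such that for all i, j: if w₂(i) ≥ w₁(j) then p_{ij} is homogeneous of degree w₂(i) − w₁(j), and if w₂(i) < w₁(j) then p_{ij} = 0. If det P ≠ 0, then w₁(j) ≤ w₂(j) for every j ∈ {1,…,n}. -/
/-! In the Leibniz expansion of a nonzero determinant some permutation `σ` has all its entries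
`P (σ l) l` nonzero, so that `w₁ l ≤ w₂ (σ l)` for every `l`. As `σ` cannot push all of
`{l | j ≤ l}` strictly above `j`, there is `l ≥ j` with `σ l ≤ j`, and monotonicity gives
`w₁ j ≤ w₁ l ≤ w₂ (σ l) ≤ w₂ j`. -/

theorem exists_perm_forall_ne_zero_of_det_ne_zero {ι R : Type*} [Fintype ι] [DecidableEq ι]
    [CommRing R] {M : Matrix ι ι R} (hM : M.det ≠ 0) :
    ∃ σ : Equiv.Perm ι, ∀ i, M (σ i) i ≠ 0 := by
  rw [Matrix.det_apply] at hM
  obtain ⟨σ, -, hσ⟩ := Finset.exists_ne_zero_of_sum_ne_zero hM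
  refine ⟨σ, fun i hi => hσ ?_⟩
  have hprod : ∏ l, M (σ l) l = 0 := Finset.prod_eq_zero (Finset.mem_univ i) hi
  rw [hprod, smul_zero]

theorem exists_ge_apply_le_of_injOn_Ici {ι : Type*} [LinearOrder ι] {f : ι → ι} {j : ι}
    (hj : (Set.Ici j).Finite) (hf : Set.InjOn f (Set.Ici j)) :
    ∃ l, j ≤ l ∧ f l ≤ j := by
  by_contra! h
  have hmaps : Set.MapsTo f (Set.Ici j) (Set.Ici j) := fun l hl => (h l hl).le
  obtain ⟨l, hl, hfl⟩ :=
    ((hj.injOn_iff_bijOn_of_mapsTo hmaps).mp hf).surjOn (Set.self_mem_Ici : j ∈ Set.Ici j)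
  exact (h l hl).ne' hfl

theorem stmt0_general {ι R α : Type*} [Fintype ι] [LinearOrder ι] [CommRing R] [Preorder α]
    {w₁ w₂ : ι → α} (hw₁ : Monotone w₁) (hw₂ : Monotone w₂) {P : Matrix ι ι R}
    (hzero : ∀ i j, ¬ w₁ j ≤ w₂ i → P i j = 0) (hdet : P.det ≠ 0) (j : ι) :
    w₁ j ≤ w₂ j := by
  obtain ⟨σ, hσ⟩ := exists_perm_forall_ne_zero_of_det_ne_zero hdet
  obtain ⟨l, hjl, hlj⟩ := exists_ge_apply_le_of_injOn_Ici (Set.toFinite _) σ.injective.injOn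
  calc
    w₁ j ≤ w₁ l := hw₁ hjl
    _ ≤ w₂ (σ l) := not_imp_comm.mp (hzero (σ l) l) (hσ l)
    _ ≤ w₂ j := hw₂ hlj

/-- **Polynomial-matrix form of Lemma 3.2.2.**
Let `k` be a field, `n ≥ 1`, and `w₁ w₂ : Fin n → ℤ` nondecreasing. Let `P` be an
`n × n` matrix with entries in `k[x,y]` such that `P i j` is homogeneous of degree
`w₂ i - w₁ j` whenever `w₂ i ≥ w₁ j`, and `P i j = 0` whenever `w₂ i < w₁ j`.
If `det P ≠ 0` then `w₁ j ≤ w₂ j` for every `j`. -/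
theorem stmt0 {k : Type*} [Field k] (n : ℕ) (hn : 1 ≤ n)
    (w₁ w₂ : Fin n → ℤ) (hw₁ : Monotone w₁) (hw₂ : Monotone w₂)
    (P : Matrix (Fin n) (Fin n) (MvPolynomial (Fin 2) k))
    (hhom : ∀ i j, w₁ j ≤ w₂ i → (P i j).IsHomogeneous ((w₂ i - w₁ j).toNat))
    (hzero : ∀ i j, w₂ i < w₁ j → P i j = 0)
    (hdet : P.det ≠ 0) :
    ∀ j, w₁ j ≤ w₂ j := by
  exact stmt0_general hw₁ hw₂ (fun i j hij => hzero i j (not_le.mp hij)) hdet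
end

section
/- Let p be a prime, let A be a commutative ring with char A = p, and let B be an étale A-algebra (formally étale and of finite presentation). Let A_φ denote A regarded as an A-algebra via the Frobenius endomorphism a ↦ a^p of A. Then the ring homomorphism B ⊗_A A_φ → B determined by b ⊗ a ↦ b^p · a (the relative Frobenius of B over A) is bijective. -/
open TensorProduct

universe u

/-- `A` regarded as an `A`-algebra via the Frobenius endomorphism `a ↦ a ^ p`. -/
def FrobTwist (p : ℕ) (A : Type*) : Type _ := A

instance (p : ℕ) (A : Type*) [CommRing A] : CommRing (FrobTwist p A) :=
  inferInstanceAs (CommRing A)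

instance (p : ℕ) (A : Type*) [CommRing A] [Fact p.Prime] [CharP A p] :
    Algebra A (FrobTwist p A) :=
  (frobenius A p).toAlgebra

/-!
A faithfully flat ring epimorphism `R → S` is an isomorphism, because it becomes one after base
change along itself. An étale map is flat, and its diagonal ideal in `S ⊗ S` is finitely generated
and idempotent, hence zero as soon as it is nil; so an étale map which is surjective on spectra and
whose diagonal ideal is nil is an isomorphism. If `p` is nilpotent in `R`, this applies to every
étale `R → S` with nil kernel whose image contains a `p`-power of each element of `S`: for `s ^ q`
in the image, `(1 ⊗ s - s ⊗ 1) ^ q` is congruent to `1 ⊗ s ^ q - s ^ q ⊗ 1 = 0` modulo `p`.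

The relative Frobenius `F : B ⊗ A_φ → B` is a map between étale `A_φ`-algebras, hence étale. It is
of the above kind, since `F (b ⊗ 1) = b ^ p` and `F x ⊗ 1 = x ^ p`.
-/

section UniversalHomeomorphism

variable {R S : Type*} [CommRing R] [CommRing S]

lemma isEpi_of_kaehlerDifferentialIdeal_le_nilradical [Algebra R S] [Algebra.EssFiniteType R S]
    [Algebra.FormallyUnramified R S]
    (h : KaehlerDifferential.ideal R S ≤ nilradical (S ⊗[R] S)) : Algebra.IsEpi R S := by
  have idempotent : IsIdempotentElem (KaehlerDifferential.ideal R S) :=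
    (Ideal.cotangent_subsingleton_iff _).mp <| inferInstanceAs <| Subsingleton Ω[S⁄R]
  have nilpotent : IsNilpotent (KaehlerDifferential.ideal R S) :=
    (KaehlerDifferential.ideal_fg R S).isNilpotent_iff_le_nilradical.mpr h
  have eq_bot : KaehlerDifferential.ideal R S = ⊥ := idempotent.eq_zero_of_isNilpotent nilpotent
  refine (Algebra.isEpi_iff_forall_one_tmul_eq R S).mpr fun s ↦ sub_eq_zero.mp ?_
  simpa only [eq_bot, Ideal.mem_bot] using
    KaehlerDifferential.one_smul_sub_smul_one_mem_ideal R s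

lemma bijective_algebraMap_of_faithfullyFlat_of_isEpi [Algebra R S] [Module.FaithfullyFlat R S]
    [Algebra.IsEpi R S] : Function.Bijective (algebraMap R S) := by
  have leftInverse : Function.LeftInverse (Algebra.TensorProduct.lmul' R (S := S))
      (algebraMap S (S ⊗[R] S)) := fun s ↦ by simp
  have lmul_injective : Function.Injective (Algebra.TensorProduct.lmul' R (S := S)) :=
    Algebra.IsEpi.injective_lift_mul
  exact Module.FaithfullyFlat.bijective_of_tensorProduct (S := S)
    ⟨leftInverse.injective, (leftInverse.rightInverse_of_injective lmul_injective).surjective⟩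

lemma isNilpotent_sub_of_pow_prime_pow_eq {p n : ℕ} (hp : p.Prime)
    (hpR : IsNilpotent (p : R)) {x y : R} (h : x ^ p ^ n = y ^ p ^ n) : IsNilpotent (x - y) := by
  obtain ⟨r, hr⟩ := exists_add_pow_prime_pow_eq hp (x - y) y n
  have sub_pow : (x - y) ^ p ^ n = p * (-((x - y) * y * r)) := by
    rw [sub_add_cancel, h] at hr
    linear_combination -hr
  exact .of_pow (m := p ^ n) <| sub_pow ▸ (Commute.all _ _).isNilpotent_mul_right hpR

theorem bijective_of_etale_of_pow_mem_range {f : R →+* S} (hf : f.Etale) {p : ℕ} (hp : p.Prime)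
    (hpR : IsNilpotent (p : R)) (hpow : ∀ s, ∃ n, s ^ p ^ n ∈ f.range)
    (hker : RingHom.ker f ≤ nilradical R) : Function.Bijective f := by
  algebraize [f]
  have : Algebra.IsEpi R S := by
    refine isEpi_of_kaehlerDifferentialIdeal_le_nilradical ?_
    rw [← KaehlerDifferential.span_range_eq_ideal, Ideal.span_le]
    rintro _ ⟨s, rfl⟩
    obtain ⟨n, r, hr⟩ := hpow s
    refine isNilpotent_sub_of_pow_prime_pow_eq (n := n) hp ?_ ?_
    · simpa only [map_natCast] using hpR.map (algebraMap R (S ⊗[R] S))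
    · rw [Algebra.TensorProduct.tmul_pow, Algebra.TensorProduct.tmul_pow, one_pow, ← hr]
      exact (Algebra.TensorProduct.tmul_one_eq_one_tmul r).symm
  have comap_surjective : Function.Surjective (PrimeSpectrum.comap (algebraMap R S)) :=
    (PrimeSpectrum.isHomeomorph_comap f
      (fun s ↦ (hpow s).imp' (p ^ ·) fun n hn ↦ ⟨pow_pos hp.pos n, hn⟩) hker).surjective
  have := Module.FaithfullyFlat.of_comap_surjective comap_surjective
  exact bijective_algebraMap_of_faithfullyFlat_of_isEpi

end UniversalHomeomorphism

lemma etale_productMap {R S T U : Type*} [CommRing R] [CommRing S] [CommRing T] [CommRing U]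
    [Algebra R S] [Algebra R T] [Algebra R U] [Algebra T U] [IsScalarTower R T U]
    [Algebra.Etale R S] [Algebra.Etale T U] (f : S →ₐ[R] U) :
    (Algebra.TensorProduct.productMap f (IsScalarTower.toAlgHom R T U)).toRingHom.Etale := by
  algebraize [(Algebra.TensorProduct.productMap f (IsScalarTower.toAlgHom R T U)).toRingHom]
  let : Algebra T (S ⊗[R] T) := Algebra.TensorProduct.rightAlgebra
  have : Algebra.Etale T (S ⊗[R] T) := .of_equiv (Algebra.TensorProduct.commRight R T S)
  have : IsScalarTower T (S ⊗[R] T) U := .of_algebraMap_eq fun t ↦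
    (Algebra.TensorProduct.productMap_right_apply f (IsScalarTower.toAlgHom R T U) t).symm
  exact Algebra.Etale.of_restrictScalars T (S ⊗[R] T) U

lemma add_pow_prime_of_natCast_eq_zero {R : Type*} [CommSemiring R] {p : ℕ} (hp : p.Prime)
    (hpR : (p : R) = 0) (x y : R) : (x + y) ^ p = x ^ p + y ^ p := by
  obtain ⟨r, hr⟩ := exists_add_pow_prime_eq hp x y
  simpa only [hpR, zero_mul, add_zero] using hr

lemma natCast_eq_zero_of_charP_of_algebra (p : ℕ) (A B : Type*) [CommSemiring A] [Semiring B]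
    [Algebra A B] [CharP A p] : (p : B) = 0 := by
  rw [← map_natCast (algebraMap A B), CharP.cast_eq_zero, map_zero]

section RelativeFrobenius

variable (p : ℕ) [Fact p.Prime] (A B : Type*) [CommRing A] [CommRing B] [Algebra A B] [CharP A p]

/-- The identity map from the type synonym `FrobTwist p A` to `A`. -/
def FrobTwist.ringEquiv (p : ℕ) (A : Type*) [CommRing A] : FrobTwist p A ≃+* A := .refl A

lemma FrobTwist.ringEquiv_smul_one (a : FrobTwist p A) :
    FrobTwist.ringEquiv p A a • (1 : FrobTwist p A) = a ^ p := by
  rw [Algebra.smul_def, mul_one]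
  rfl

/-- Functoriality of `A ↦ FrobTwist p A`: the structure map `A → B` read as `A_φ → B_φ`. The
priority is low so that for `B = A` the identity structure is found first. -/
local instance (priority := low) FrobTwist.algebra :
    Algebra (FrobTwist p A) (FrobTwist p B) :=
  inferInstanceAs (Algebra A B)

omit [Fact p.Prime] [CharP A p] in
lemma FrobTwist.etale [h : Algebra.Etale A B] : Algebra.Etale (FrobTwist p A) (FrobTwist p B) := h

/-- `B_φ` as an `A`-algebra via `A → A_φ → B_φ`, that is, via `a ↦ a ^ p`. The priority is low so
that for `B = A` the Frobenius structure of `FrobTwist` itself is found first. -/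
local instance (priority := low) FrobTwist.algebraBase : Algebra A (FrobTwist p B) :=
  ((algebraMap (FrobTwist p A) (FrobTwist p B)).comp (algebraMap A (FrobTwist p A))).toAlgebra

local instance FrobTwist.isScalarTower : IsScalarTower A (FrobTwist p A) (FrobTwist p B) :=
  .of_algebraMap_eq' rfl

/-- The `p`-th power map of `B`, which is `A`-linear as a map into `B_φ`. It is built directly
because Mathlib's `frobenius B p` does not cover `B = 0`, which has characteristic `1`. -/
def FrobTwist.frobeniusAlgHom : B →ₐ[A] FrobTwist p B where
  toFun b := (b ^ p : B)
  map_one' := one_pow p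
  map_mul' x y := mul_pow x y p
  map_zero' := zero_pow (Fact.out : p.Prime).ne_zero
  map_add' := add_pow_prime_of_natCast_eq_zero Fact.out (natCast_eq_zero_of_charP_of_algebra p A B)
  commutes' a := (map_pow (algebraMap A B) a p).symm

/-- The relative Frobenius `b ⊗ a ↦ b ^ p * a` of `B` over `A`. It is built as an `A`-algebra map
into `B_φ`, whose underlying ring is `B`. -/
noncomputable def relativeFrobenius : B ⊗[A] FrobTwist p A →+* B :=
  (Algebra.TensorProduct.productMap (FrobTwist.frobeniusAlgHom p A B)
    (IsScalarTower.toAlgHom A (FrobTwist p A) (FrobTwist p B))).toRingHom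

lemma etale_relativeFrobenius [Algebra.Etale A B] : (relativeFrobenius p A B).Etale :=
  have := FrobTwist.etale p A B
  etale_productMap (FrobTwist.frobeniusAlgHom p A B)

variable {A B}

lemma relativeFrobenius_tmul (b : B) (a : FrobTwist p A) :
    relativeFrobenius p A B (b ⊗ₜ a) = b ^ p * algebraMap A B (FrobTwist.ringEquiv p A a) :=
  Algebra.TensorProduct.productMap_apply_tmul (FrobTwist.frobeniusAlgHom p A B)
    (IsScalarTower.toAlgHom A (FrobTwist p A) (FrobTwist p B)) b a

lemma relativeFrobenius_apply_tmul_one_eq_pow (x : B ⊗[A] FrobTwist p A) :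
    relativeFrobenius p A B x ⊗ₜ[A] (1 : FrobTwist p A) = x ^ p := by
  induction x using TensorProduct.induction_on with
  | zero => rw [map_zero, TensorProduct.zero_tmul, zero_pow (Fact.out : p.Prime).ne_zero]
  | tmul b a =>
    rw [relativeFrobenius_tmul, mul_comm, ← Algebra.smul_def, TensorProduct.smul_tmul,
      FrobTwist.ringEquiv_smul_one, Algebra.TensorProduct.tmul_pow]
  | add x y hx hy =>
    rw [map_add, TensorProduct.add_tmul, hx, hy, add_pow_prime_of_natCast_eq_zero Fact.out
      (natCast_eq_zero_of_charP_of_algebra p A _)]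

variable (A B)

theorem relativeFrobenius_bijective [Algebra.Etale A B] :
    Function.Bijective (relativeFrobenius p A B) := by
  have hp : p.Prime := Fact.out
  refine bijective_of_etale_of_pow_mem_range (etale_relativeFrobenius p A B) hp ?_ ?_ ?_
  · rw [natCast_eq_zero_of_charP_of_algebra p A]
    exact .zero
  · intro b
    refine ⟨1, b ⊗ₜ 1, ?_⟩
    rw [relativeFrobenius_tmul, pow_one, map_one, map_one, mul_one]
  · intro x hx
    have pow_eq_zero : x ^ p = 0 := by
      rw [← relativeFrobenius_apply_tmul_one_eq_pow, RingHom.mem_ker.mp hx,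
        TensorProduct.zero_tmul]
    exact ⟨p, pow_eq_zero⟩

end RelativeFrobenius

/-- **Étale algebras in characteristic `p` are relatively perfect (input to Prop. 1.6.2).**
Let `p` be prime, `A` a commutative ring of characteristic `p`, and `B` an étale
`A`-algebra (formally étale and of finite presentation). Then the ring homomorphism
`B ⊗_A A_φ → B` determined by `b ⊗ a ↦ b^p · a` (the relative Frobenius of `B` over
`A`), where `A_φ` is `A` viewed as an `A`-algebra via Frobenius, is bijective. -/
theorem stmt7 (p : ℕ) [Fact p.Prime] (A B : Type u) [CommRing A] [CommRing B]
    [Algebra A B] [CharP A p]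
    [Algebra.FormallyEtale A B] [Algebra.FinitePresentation A B] :
    ∃ f : (B ⊗[A] FrobTwist p A) →+* B,
      (∀ (b : B) (a : FrobTwist p A),
        f (b ⊗ₜ[A] a) = b ^ p * algebraMap A B a) ∧ Function.Bijective f := by
  have : Algebra.Etale A B := ⟨inferInstance, inferInstance⟩
  exact ⟨relativeFrobenius p A B, relativeFrobenius_tmul p, relativeFrobenius_bijective p A B⟩
end
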